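/- Let f : [ω₂]² → [ω₂]^{≤ω} satisfy f{α,β} ⊆ α ∩ β for all pairs. Assume s = (a^s, h^s, i^s) ∈ P_f, a^s = S ∪ E ∪ F with Q ⊆ S, every element of S below every element of E and every element of E below every element of F, E = {γ_0 < γ_1 < … < γ_{k-1}} and F = {γ_{i,0}, γ_{i,1} : i < k}, and moreover: (i) for all i < k, h^s(γ_{i,0}) ∩ h^s(γ_{i,1}) = ⋃{h^s(ν) : ν ∈ Q ∪ E}; (ii) for all i < k and all ξ ∈ S, f{ξ,γ_i} = f{ξ,γ_{i,0}} = f{ξ,γ_{i,1}}. Then there is a condition r = (a^r, h^r, i^r) ∈ P_f with a^r = S ∪ E such that: (a) r ≤ s↾S; (b) r ≤ s↾(Q ∪ E); (c) S \ ⋃{h^s(ν) : ν ∈ Q ∪ E} ⊆ h^r(γ_0); (d) s↾(S ∪ E) ≺ r. -/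

import Mathlib

attribute [local instance] Classical.propDecidable

noncomputable section

/-- The second uncountable cardinal ω₂, as an ordinal. -/
def omega2 : Ordinal := (Cardinal.aleph 2).ord

/-- The operation `x * y` on nonempty finite sets of ordinals with `max x ≠ max y`:
`x \ y` if `max x ∈ y`, `y \ x` if `max y ∈ x`, and `x ∩ y` otherwise. -/
def ostar (x y : Finset Ordinal) : Finset Ordinal :=
  if ∃ m ∈ y, x.max = (m : WithBot Ordinal) then x \ y
  else if ∃ m ∈ x, y.max = (m : WithBot Ordinal) then y \ x
  else x ∩ y

/-- The conditions of the poset `P_f`: triples `(a, h, i)` where `a` is a finite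
subset of ω₂, `h : a → 𝒫(a)` with `max (h ξ) = ξ`, `i : [a]² → 𝒫(a)` with
`i {ξ,η} ⊆ f {ξ,η}`, and `h ξ * h η ⊆ ⋃ {h ν : ν ∈ i {ξ,η}}`. -/
structure PfCond (f : Ordinal → Ordinal → Set Ordinal) where
  a : Finset Ordinal
  h : Ordinal → Finset Ordinal
  i : Ordinal → Ordinal → Finset Ordinal
  a_lt : ∀ ξ ∈ a, ξ < omega2
  h_sub : ∀ ξ ∈ a, h ξ ⊆ a
  h_mem : ∀ ξ ∈ a, ξ ∈ h ξ
  h_le : ∀ ξ ∈ a, ∀ η ∈ h ξ, η ≤ ξ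
  i_symm : ∀ ξ η, i ξ η = i η ξ
  i_sub_f : ∀ ξ ∈ a, ∀ η ∈ a, ξ ≠ η → ∀ ν ∈ i ξ η, ν ∈ f ξ η
  i_sub_a : ∀ ξ ∈ a, ∀ η ∈ a, ξ ≠ η → i ξ η ⊆ a
  star_cond : ∀ ξ ∈ a, ∀ η ∈ a, ξ ≠ η → ostar (h ξ) (h η) ⊆ (i ξ η).biUnion h

/-- The order on `P_f`: `p ≤ q` iff `a^p ⊇ a^q`, `h^p(ξ) ∩ a^q = h^q(ξ)` for
`ξ ∈ a^q`, and `i^p` extends `i^q`. -/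
def PfLe {f : Ordinal → Ordinal → Set Ordinal} (p q : PfCond f) : Prop :=
  q.a ⊆ p.a ∧ (∀ ξ ∈ q.a, p.h ξ ∩ q.a = q.h ξ) ∧
    ∀ ξ ∈ q.a, ∀ η ∈ q.a, ξ ≠ η → p.i ξ η = q.i ξ η

/-- The extended order on restrictions of conditions:
`p↾bp ≤ q↾bq` iff `bp ⊇ bq`, `h^p(ξ) ∩ bq = h^q(ξ) ∩ bq` for each `ξ ∈ bq`,
and `i^p` and `i^q` agree on pairs from `bq`. -/
def RestLe {f : Ordinal → Ordinal → Set Ordinal} (p : PfCond f) (bp : Finset Ordinal)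
    (q : PfCond f) (bq : Finset Ordinal) : Prop :=
  bq ⊆ bp ∧ (∀ ξ ∈ bq, p.h ξ ∩ bq = q.h ξ ∩ bq) ∧
    ∀ ξ ∈ bq, ∀ η ∈ bq, ξ ≠ η → p.i ξ η = q.i ξ η

/-- `s↾b ≺ r` : the domains agree and for every `α` in the domain and every
`c ⊆ b ∩ α` we have `U^{s↾b}(α,c) ⊆ U^r(α,c)`. -/
def PrecRest {f : Ordinal → Ordinal → Set Ordinal} (s : PfCond f) (b : Finset Ordinal)
    (r : PfCond f) : Prop :=
  b = r.a ∧ ∀ α ∈ b, ∀ c : Finset Ordinal, (∀ ν ∈ c, ν ∈ b ∧ ν < α) →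
    (s.h α ∩ b) \ c.biUnion (fun ν => s.h ν ∩ b) ⊆ r.h α \ c.biUnion r.h

/-!
To pass from `s↾(S ∪ E)` to `r`, a set `D ⊆ S` is added to `h ξ` for exactly those `ξ` with
`ε ∈ h ξ`; in the application `D` is `S \ ⋃ {h ν : ν ∈ Q ∪ E}` and `ε` is `γ₀`. On two elements of
`E` the star condition at a point of `D` is the old star condition at `ε`. For `ξ ∈ S` and `η ∈ E`
it is new only at points `ζ ∈ h ξ` such that exactly one of `ξ`, `ζ` is in `D`. By (i), some element
`δ` of the pair in `F` attached to `η` then has exactly one of `ξ`, `ζ` in `h δ`, so the star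
condition of `s` for `ξ` and `δ` supplies a witness, and by (ii) it may be added to `i {ξ, η}`.
-/

section Star

variable {x y B : Finset Ordinal} {ξ η : Ordinal}

theorem exists_mem_max_eq_iff (hx : IsGreatest (x : Set Ordinal) ξ) :
    (∃ m ∈ y, x.max = (m : WithBot Ordinal)) ↔ ξ ∈ y := by
  have hmax : x.max = (ξ : WithBot Ordinal) :=
    le_antisymm (Finset.max_le fun _ hζ => WithBot.coe_le_coe.2 (hx.2 hζ)) (Finset.le_max hx.1)
  simp [hmax]

theorem ostar_eq_ite (hx : IsGreatest (x : Set Ordinal) ξ) (hy : IsGreatest (y : Set Ordinal) η) :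
    ostar x y = if ξ ∈ y then x \ y else if η ∈ x then y \ x else x ∩ y := by
  simp only [ostar, exists_mem_max_eq_iff hx, exists_mem_max_eq_iff hy]

theorem ostar_comm (hx : IsGreatest (x : Set Ordinal) ξ) (hy : IsGreatest (y : Set Ordinal) η)
    (hne : ξ ≠ η) : ostar x y = ostar y x := by
  rw [ostar_eq_ite hx hy, ostar_eq_ite hy hx]
  split_ifs with hξ hη
  · exact absurd (le_antisymm (hy.2 hξ) (hx.2 hη)) hne
  · rfl
  · rfl
  · exact Finset.inter_comm x y

theorem ostar_subset_iff (hx : IsGreatest (x : Set Ordinal) ξ)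
    (hy : IsGreatest (y : Set Ordinal) η) (hlt : ξ < η) :
    ostar x y ⊆ B ↔ ∀ ζ ∈ x, (ξ ∈ y ↔ ζ ∉ y) → ζ ∈ B := by
  have hη : η ∉ x := fun h => (hx.2 h).not_gt hlt
  rw [ostar_eq_ite hx hy, if_neg hη]
  by_cases h : ξ ∈ y <;> simp [h, Finset.subset_iff]

end Star

/-- `b` is an initial segment of `a`: a subset that is downward closed relative to `a`, not in the
whole order. -/
def IsInitialSegment {α : Type*} [LE α] (b a : Finset α) : Prop :=
  b ⊆ a ∧ ∀ x ∈ b, ∀ y ∈ a, y ≤ x → y ∈ b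

namespace PfCond

variable {f : Ordinal → Ordinal → Set Ordinal} (s : PfCond f) {S E Q D b : Finset Ordinal}
  {Z : Ordinal → Finset Ordinal} {ε ξ η ζ : Ordinal}

theorem isGreatest_h (hξ : ξ ∈ s.a) : IsGreatest (s.h ξ : Set Ordinal) ξ :=
  ⟨s.h_mem ξ hξ, fun ζ hζ => s.h_le ξ hξ ζ hζ⟩

theorem h_subset_of_isInitialSegment (hb : IsInitialSegment b s.a) (hξ : ξ ∈ b) : s.h ξ ⊆ b :=
  fun ζ hζ => hb.2 ξ hξ ζ (s.h_sub ξ (hb.1 hξ) hζ) (s.h_le ξ (hb.1 hξ) ζ hζ)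

theorem exists_mem_i (hξ : ξ ∈ s.a) (hη : η ∈ s.a) (hlt : ξ < η) (hζ : ζ ∈ s.h ξ)
    (hiff : ξ ∈ s.h η ↔ ζ ∉ s.h η) : ∃ ν ∈ s.i ξ η, ζ ∈ s.h ν :=
  Finset.mem_biUnion.1 <| (ostar_subset_iff (s.isGreatest_h hξ) (s.isGreatest_h hη) hlt).1
    (s.star_cond ξ hξ η hη hlt.ne) ζ hζ hiff

/-- A condition of `P_f` from data satisfying the requirements on `i` for increasing pairs only. -/
def ofLt (hsymm : ∀ α β, f α β = f β α) (a : Finset Ordinal) (h : Ordinal → Finset Ordinal)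
    (i : Ordinal → Ordinal → Finset Ordinal) (a_lt : ∀ ξ ∈ a, ξ < omega2)
    (h_sub : ∀ ξ ∈ a, h ξ ⊆ a) (isGreatest : ∀ ξ ∈ a, IsGreatest (h ξ : Set Ordinal) ξ)
    (i_symm : ∀ ξ η, i ξ η = i η ξ)
    (i_sub : ∀ ξ ∈ a, ∀ η ∈ a, ξ < η → ∀ ν ∈ i ξ η, ν ∈ f ξ η ∧ ν ∈ a)
    (star : ∀ ξ ∈ a, ∀ η ∈ a, ξ < η → ∀ ζ ∈ h ξ, (ξ ∈ h η ↔ ζ ∉ h η) → ∃ ν ∈ i ξ η, ζ ∈ h ν) :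
    PfCond f where
  a := a
  h := h
  i := i
  a_lt := a_lt
  h_sub := h_sub
  h_mem ξ hξ := (isGreatest ξ hξ).1
  h_le ξ hξ _ hη := (isGreatest ξ hξ).2 hη
  i_symm := i_symm
  i_sub_f ξ hξ η hη hne ν hν := by
    rcases hne.lt_or_gt with hlt | hlt
    · exact (i_sub ξ hξ η hη hlt ν hν).1
    · exact hsymm η ξ ▸ (i_sub η hη ξ hξ hlt ν (i_symm ξ η ▸ hν)).1
  i_sub_a ξ hξ η hη hne ν hν := by
    rcases hne.lt_or_gt with hlt | hlt
    · exact (i_sub ξ hξ η hη hlt ν hν).2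
    · exact (i_sub η hη ξ hξ hlt ν (i_symm ξ η ▸ hν)).2
  star_cond ξ hξ η hη hne := by
    have star_of_lt : ∀ ξ ∈ a, ∀ η ∈ a, ξ < η → ostar (h ξ) (h η) ⊆ (i ξ η).biUnion h :=
      fun ξ hξ η hη hlt => (ostar_subset_iff (isGreatest ξ hξ) (isGreatest η hη) hlt).2
        fun ζ hζ hiff => Finset.mem_biUnion.2 (star ξ hξ η hη hlt ζ hζ hiff)
    rcases hne.lt_or_gt with hlt | hlt
    · exact star_of_lt ξ hξ η hη hlt
    · rw [ostar_comm (isGreatest ξ hξ) (isGreatest η hη) hne, i_symm]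
      exact star_of_lt η hη ξ hξ hlt

/-- The set `h ξ` of the grafted condition: `D` is added to the sets `h ξ` containing `ε`. -/
def graftH (D : Finset Ordinal) (ε ξ : Ordinal) : Finset Ordinal :=
  s.h ξ ∪ if ε ∈ s.h ξ then D else ∅

/-- The witnesses that the pair `ξ ∈ S \ Q`, `η ∈ E` inherits from the pairs `{ξ, ζ}`, `ζ ∈ Z η`.
Pairs inside `Q` or `E`, or between them, inherit nothing. -/
def inheritedI (S E Q : Finset Ordinal) (Z : Ordinal → Finset Ordinal) (ξ η : Ordinal) :
    Finset Ordinal :=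
  if ξ ∈ S \ Q ∧ η ∈ E then (Z η).biUnion (s.i ξ) else ∅

/-- The set `i {ξ, η}` of the grafted condition. -/
def graftI (S E Q : Finset Ordinal) (Z : Ordinal → Finset Ordinal) (ξ η : Ordinal) :
    Finset Ordinal :=
  s.i ξ η ∪ (s.inheritedI S E Q Z ξ η ∪ s.inheritedI S E Q Z η ξ)

/-- The configurations in which a set `D ⊆ S` can be added to sets `h ξ` with `ξ ∈ E`, preserving
the restrictions to `S` and to `Q ∪ E`. The set `Z η` consists of elements of `a` playing the role
of `η` with respect to `S`. -/
structure IsGraftable (s : PfCond f) (S E Q D : Finset Ordinal) (Z : Ordinal → Finset Ordinal) :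
    Prop where
  isInitialSegment : IsInitialSegment (S ∪ E) s.a
  lt : ∀ ξ ∈ S, ∀ η ∈ E, ξ < η
  Q_subset : Q ⊆ S
  D_subset : D ⊆ S
  disjoint : ∀ η ∈ Q ∪ E, Disjoint D (s.h η)
  Z_subset : ∀ η ∈ E, Z η ⊆ s.a
  lt_Z : ∀ η ∈ E, ∀ ζ ∈ Z η, ∀ ξ ∈ S, ξ < ζ
  f_subset : ∀ η ∈ E, ∀ ζ ∈ Z η, ∀ ξ ∈ S, f ξ ζ ⊆ f ξ η
  mem_D_iff : ∀ η ∈ E, ∀ ρ ∈ S, ρ ∈ D ↔ ∃ ζ ∈ Z η, ρ ∉ s.h ζ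

theorem h_subset_graftH : s.h ξ ⊆ s.graftH D ε ξ :=
  Finset.subset_union_left

theorem i_subset_graftI : s.i ξ η ⊆ s.graftI S E Q Z ξ η :=
  Finset.subset_union_left

theorem graftI_comm : s.graftI S E Q Z ξ η = s.graftI S E Q Z η ξ := by
  simp only [graftI, s.i_symm ξ η, Finset.union_comm (s.inheritedI S E Q Z ξ η)]

theorem graftH_eq_of_notMem (hε : ε ∉ s.h ξ) : s.graftH D ε ξ = s.h ξ := by
  simp [graftH, hε]

theorem subset_graftH (hε : ε ∈ s.h ξ) : D ⊆ s.graftH D ε ξ := by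
  simp [graftH, hε]

theorem mem_graftH_iff_of_notMem (hζ : ζ ∉ D) : ζ ∈ s.graftH D ε ξ ↔ ζ ∈ s.h ξ := by
  by_cases hε : ε ∈ s.h ξ <;> simp [graftH, hε, hζ]

variable {s}

namespace IsGraftable

variable (hG : s.IsGraftable S E Q D Z)

include hG

theorem mem_a_of_mem_S (hξ : ξ ∈ S) : ξ ∈ s.a :=
  hG.isInitialSegment.1 (Finset.mem_union_left E hξ)

theorem mem_a_of_mem_E (hη : η ∈ E) : η ∈ s.a :=
  hG.isInitialSegment.1 (Finset.mem_union_right S hη)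

theorem disjoint_S_E : Disjoint S E :=
  Finset.disjoint_left.2 fun ξ hξ hξ' => (hG.lt ξ hξ ξ hξ').false

theorem isInitialSegment_S : IsInitialSegment S s.a :=
  ⟨fun _ => hG.mem_a_of_mem_S, fun ξ hξ ν hν hle =>
    have hνSE := hG.isInitialSegment.2 ξ (Finset.mem_union_left E hξ) ν hν hle
    (Finset.mem_union.1 hνSE).resolve_right fun hνE => (hG.lt ξ hξ ν hνE).not_ge hle⟩

theorem notMem_D_of_mem (hξ : ξ ∈ Q ∪ E) : ξ ∉ D := fun hD =>
  Finset.disjoint_left.1 (hG.disjoint ξ hξ) hD <|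
    s.h_mem ξ (hG.isInitialSegment.1 (Finset.union_subset_union_left hG.Q_subset hξ))

theorem graftH_eq_of_mem_S (hε : ε ∈ E) (hξ : ξ ∈ S) : s.graftH D ε ξ = s.h ξ :=
  s.graftH_eq_of_notMem fun h =>
    (s.h_le ξ (hG.mem_a_of_mem_S hξ) ε h).not_gt (hG.lt ξ hξ ε hε)

theorem mem_graftH_iff_of_mem (hη : η ∈ E) (hζ : ζ ∈ D) : ζ ∈ s.graftH D ε η ↔ ε ∈ s.h η := by
  have hζη : ζ ∉ s.h η :=
    Finset.disjoint_left.1 (hG.disjoint η (Finset.mem_union_right Q hη)) hζ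
  by_cases hε : ε ∈ s.h η <;> simp [graftH, hε, hζη, hζ]

theorem graftH_subset (hξ : ξ ∈ S ∪ E) : s.graftH D ε ξ ⊆ S ∪ E := by
  have hD : (if ε ∈ s.h ξ then D else ∅) ⊆ S ∪ E := by
    split_ifs
    · exact hG.D_subset.trans Finset.subset_union_left
    · exact Finset.empty_subset _
  exact Finset.union_subset (s.h_subset_of_isInitialSegment hG.isInitialSegment hξ) hD

theorem isGreatest_graftH (hε : ε ∈ E) (hξ : ξ ∈ S ∪ E) :
    IsGreatest (s.graftH D ε ξ : Set Ordinal) ξ := by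
  have hmax := s.isGreatest_h (hG.isInitialSegment.1 hξ)
  rcases Finset.mem_union.1 hξ with hξS | hξE
  · rwa [hG.graftH_eq_of_mem_S hε hξS]
  · refine ⟨s.h_subset_graftH hmax.1, fun ζ hζ => ?_⟩
    by_cases hζD : ζ ∈ D
    · exact (hG.lt ζ (hG.D_subset hζD) ξ hξE).le
    · exact hmax.2 ((s.mem_graftH_iff_of_notMem hζD).1 hζ)

theorem graftI_eq_of_mem_S (hξ : ξ ∈ S) (hη : η ∈ S) : s.graftI S E Q Z ξ η = s.i ξ η := by
  simp [graftI, inheritedI, Finset.disjoint_left.1 hG.disjoint_S_E hξ,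
    Finset.disjoint_left.1 hG.disjoint_S_E hη]

theorem graftI_eq_of_mem_Q_union_E (hξ : ξ ∈ Q ∪ E) (hη : η ∈ Q ∪ E) :
    s.graftI S E Q Z ξ η = s.i ξ η := by
  have notMem_sdiff : ∀ ξ ∈ Q ∪ E, ξ ∉ S \ Q := fun ξ hξ hξS =>
    Finset.disjoint_left.1 hG.disjoint_S_E (Finset.mem_sdiff.1 hξS).1 <|
      (Finset.mem_union.1 hξ).resolve_left (Finset.mem_sdiff.1 hξS).2
  simp only [graftI, inheritedI, notMem_sdiff ξ hξ, notMem_sdiff η hη, false_and, if_false,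
    Finset.union_empty]

theorem mem_f_and_mem_a_of_mem_inheritedI {ν : Ordinal} (hν : ν ∈ s.inheritedI S E Q Z ξ η) :
    ν ∈ f ξ η ∧ ν ∈ s.a := by
  have hcond : ξ ∈ S \ Q ∧ η ∈ E := by
    by_contra h
    simp only [inheritedI, if_neg h, Finset.notMem_empty] at hν
  obtain ⟨hξ, hη⟩ := hcond
  rw [inheritedI, if_pos ⟨hξ, hη⟩] at hν
  obtain ⟨ζ, hζ, hν⟩ := Finset.mem_biUnion.1 hν
  have hξS : ξ ∈ S := (Finset.mem_sdiff.1 hξ).1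
  have hξa : ξ ∈ s.a := hG.mem_a_of_mem_S hξS
  have hζa : ζ ∈ s.a := hG.Z_subset η hη hζ
  have hne : ξ ≠ ζ := (hG.lt_Z η hη ζ hζ ξ hξS).ne
  exact ⟨hG.f_subset η hη ζ hζ ξ hξS (s.i_sub_f ξ hξa ζ hζa hne ν hν),
    s.i_sub_a ξ hξa ζ hζa hne hν⟩

theorem mem_f_and_mem_of_mem_graftI (hsymm : ∀ α β, f α β = f β α)
    (hle : ∀ α β, f α β ⊆ Set.Iic α) (hξ : ξ ∈ S ∪ E) (hη : η ∈ S ∪ E) (hne : ξ ≠ η) {ν : Ordinal}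
    (hν : ν ∈ s.graftI S E Q Z ξ η) : ν ∈ f ξ η ∧ ν ∈ S ∪ E := by
  have hξa := hG.isInitialSegment.1 hξ
  have hηa := hG.isInitialSegment.1 hη
  have hfa : ν ∈ f ξ η ∧ ν ∈ s.a := by
    simp only [graftI, Finset.mem_union] at hν
    rcases hν with hν | hν | hν
    · exact ⟨s.i_sub_f ξ hξa η hηa hne ν hν, s.i_sub_a ξ hξa η hηa hne hν⟩
    · exact hG.mem_f_and_mem_a_of_mem_inheritedI hν
    · exact hsymm η ξ ▸ hG.mem_f_and_mem_a_of_mem_inheritedI hν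
  exact ⟨hfa.1, hG.isInitialSegment.2 ξ hξ ν hfa.2 (hle ξ η hfa.1)⟩

theorem exists_mem_graftI_of_mem_h (hξ : ξ ∈ S ∪ E) (hη : η ∈ S ∪ E) (hlt : ξ < η)
    (hζ : ζ ∈ s.h ξ) (hiff : ξ ∈ s.h η ↔ ζ ∉ s.h η) :
    ∃ ν ∈ s.graftI S E Q Z ξ η, ζ ∈ s.graftH D ε ν := by
  obtain ⟨ν, hν, hζν⟩ :=
    s.exists_mem_i (hG.isInitialSegment.1 hξ) (hG.isInitialSegment.1 hη) hlt hζ hiff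
  exact ⟨ν, s.i_subset_graftI hν, s.h_subset_graftH hζν⟩

theorem exists_mem_graftI_of_mem_E (hξ : ξ ∈ E) (hη : η ∈ E) (hlt : ξ < η)
    (hζ : ζ ∈ s.graftH D ε ξ) (hiff : ξ ∈ s.graftH D ε η ↔ ζ ∉ s.graftH D ε η) :
    ∃ ν ∈ s.graftI S E Q Z ξ η, ζ ∈ s.graftH D ε ν := by
  rw [s.mem_graftH_iff_of_notMem (hG.notMem_D_of_mem (Finset.mem_union_right Q hξ))] at hiff
  by_cases hζD : ζ ∈ D
  · rw [hG.mem_graftH_iff_of_mem hξ hζD] at hζ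
    rw [hG.mem_graftH_iff_of_mem hη hζD] at hiff
    obtain ⟨ν, hν, hεν⟩ :=
      s.exists_mem_i (hG.mem_a_of_mem_E hξ) (hG.mem_a_of_mem_E hη) hlt hζ hiff
    exact ⟨ν, s.i_subset_graftI hν, s.subset_graftH hεν hζD⟩
  · rw [s.mem_graftH_iff_of_notMem hζD] at hζ hiff
    exact hG.exists_mem_graftI_of_mem_h (Finset.mem_union_right S hξ)
      (Finset.mem_union_right S hη) hlt hζ hiff

theorem exists_mem_Z_mem_iff_notMem (hη : η ∈ E) (hξ : ξ ∈ S) (hζ : ζ ∈ S)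
    (hiff : ξ ∈ D ↔ ζ ∉ D) : ∃ δ ∈ Z η, ξ ∈ s.h δ ↔ ζ ∉ s.h δ := by
  have mem_of_notMem : ∀ ρ ∈ S, ρ ∉ D → ∀ δ ∈ Z η, ρ ∈ s.h δ := fun ρ hρ hρD δ hδ =>
    not_not.1 fun h => hρD ((hG.mem_D_iff η hη ρ hρ).2 ⟨δ, hδ, h⟩)
  by_cases hξD : ξ ∈ D
  · obtain ⟨δ, hδ, hξδ⟩ := (hG.mem_D_iff η hη ξ hξ).1 hξD
    exact ⟨δ, hδ, iff_of_false hξδ (not_not.2 (mem_of_notMem ζ hζ (hiff.1 hξD) δ hδ))⟩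
  · have hζD : ζ ∈ D := not_not.1 (mt hiff.2 hξD)
    obtain ⟨δ, hδ, hζδ⟩ := (hG.mem_D_iff η hη ζ hζ).1 hζD
    exact ⟨δ, hδ, iff_of_true (mem_of_notMem ξ hξ hξD δ hδ) hζδ⟩

theorem exists_mem_graftI_of_mem_D_iff_notMem (hξ : ξ ∈ S) (hη : η ∈ E) (hζ : ζ ∈ s.h ξ)
    (hiff : ξ ∈ D ↔ ζ ∉ D) : ∃ ν ∈ s.graftI S E Q Z ξ η, ζ ∈ s.graftH D ε ν := by
  have hξQ : ξ ∉ Q := fun hξQ => by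
    have hξQE : ξ ∈ Q ∪ E := Finset.mem_union_left E hξQ
    have hζD : ζ ∉ D := Finset.disjoint_right.1 (hG.disjoint ξ hξQE) hζ
    exact hG.notMem_D_of_mem hξQE (hiff.2 hζD)
  have hζS : ζ ∈ S := s.h_subset_of_isInitialSegment hG.isInitialSegment_S hξ hζ
  obtain ⟨δ, hδ, hiff⟩ := hG.exists_mem_Z_mem_iff_notMem hη hξ hζS hiff
  obtain ⟨ν, hν, hζν⟩ := s.exists_mem_i (hG.mem_a_of_mem_S hξ) (hG.Z_subset η hη hδ)
    (hG.lt_Z η hη δ hδ ξ hξ) hζ hiff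
  have hνX : ν ∈ s.inheritedI S E Q Z ξ η := by
    rw [inheritedI, if_pos ⟨Finset.mem_sdiff.2 ⟨hξ, hξQ⟩, hη⟩]
    exact Finset.mem_biUnion.2 ⟨δ, hδ, hν⟩
  exact ⟨ν, Finset.mem_union_right _ (Finset.mem_union_left _ hνX), s.h_subset_graftH hζν⟩

theorem exists_mem_graftI_of_mem_S_of_mem_E (hξ : ξ ∈ S) (hη : η ∈ E) (hζ : ζ ∈ s.h ξ)
    (hiff : ξ ∈ s.graftH D ε η ↔ ζ ∉ s.graftH D ε η) :
    ∃ ν ∈ s.graftI S E Q Z ξ η, ζ ∈ s.graftH D ε ν := by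
  by_cases hD : ξ ∈ D ↔ ζ ∉ D
  · exact hG.exists_mem_graftI_of_mem_D_iff_notMem hξ hη hζ hD
  by_cases hξD : ξ ∈ D
  · have hζD : ζ ∈ D := not_not.1 fun h => hD (iff_of_true hξD h)
    rw [hG.mem_graftH_iff_of_mem hη hξD, hG.mem_graftH_iff_of_mem hη hζD] at hiff
    exact absurd hiff iff_not_self
  · have hζD : ζ ∉ D := fun h => hD (iff_of_false hξD (not_not.2 h))
    rw [s.mem_graftH_iff_of_notMem hξD, s.mem_graftH_iff_of_notMem hζD] at hiff
    exact hG.exists_mem_graftI_of_mem_h (Finset.mem_union_left E hξ)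
      (Finset.mem_union_right S hη) (hG.lt ξ hξ η hη) hζ hiff

theorem exists_mem_graftI (hε : ε ∈ E) (hξ : ξ ∈ S ∪ E) (hη : η ∈ S ∪ E) (hlt : ξ < η)
    (hζ : ζ ∈ s.graftH D ε ξ) (hiff : ξ ∈ s.graftH D ε η ↔ ζ ∉ s.graftH D ε η) :
    ∃ ν ∈ s.graftI S E Q Z ξ η, ζ ∈ s.graftH D ε ν := by
  rcases Finset.mem_union.1 hξ with hξS | hξE
  · rw [hG.graftH_eq_of_mem_S hε hξS] at hζ
    rcases Finset.mem_union.1 hη with hηS | hηE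
    · rw [hG.graftH_eq_of_mem_S hε hηS] at hiff
      exact hG.exists_mem_graftI_of_mem_h hξ hη hlt hζ hiff
    · exact hG.exists_mem_graftI_of_mem_S_of_mem_E hξS hηE hζ hiff
  · have hηE : η ∈ E :=
      (Finset.mem_union.1 hη).resolve_left fun hηS => (hG.lt η hηS ξ hξE).not_gt hlt
    exact hG.exists_mem_graftI_of_mem_E hξE hηE hlt hζ hiff

variable (hsymm : ∀ α β, f α β = f β α) (hle : ∀ α β, f α β ⊆ Set.Iic α) (hε : ε ∈ E)

/-- The condition with domain `S ∪ E` obtained from `s` by grafting `D` onto `ε`. -/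
def graft : PfCond f :=
  PfCond.ofLt hsymm (S ∪ E) (s.graftH D ε) (s.graftI S E Q Z)
    (fun ξ hξ => s.a_lt ξ (hG.isInitialSegment.1 hξ))
    (fun _ hξ => hG.graftH_subset hξ)
    (fun _ hξ => hG.isGreatest_graftH hε hξ)
    (fun _ _ => s.graftI_comm)
    (fun _ hξ _ hη hlt _ hν => hG.mem_f_and_mem_of_mem_graftI hsymm hle hξ hη hlt.ne hν)
    (fun _ hξ _ hη hlt _ hζ hiff => hG.exists_mem_graftI hε hξ hη hlt hζ hiff)

theorem restLe_graft_S : RestLe (hG.graft hsymm hle hε) (S ∪ E) s S :=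
  ⟨Finset.subset_union_left,
    fun _ hξ => congrArg (· ∩ S) (hG.graftH_eq_of_mem_S hε hξ),
    fun _ hξ _ hη _ => hG.graftI_eq_of_mem_S hξ hη⟩

theorem restLe_graft_Q_union_E : RestLe (hG.graft hsymm hle hε) (S ∪ E) s (Q ∪ E) := by
  refine ⟨Finset.union_subset_union_left hG.Q_subset, fun ξ _ => Finset.ext fun ζ => ?_,
    fun _ hξ _ hη _ => hG.graftI_eq_of_mem_Q_union_E hξ hη⟩
  change ζ ∈ s.graftH D ε ξ ∩ (Q ∪ E) ↔ _
  rw [Finset.mem_inter, Finset.mem_inter]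
  exact and_congr_left fun hζ => s.mem_graftH_iff_of_notMem (hG.notMem_D_of_mem hζ)

theorem subset_graft_h : D ⊆ (hG.graft hsymm hle hε).h ε :=
  s.subset_graftH (s.h_mem ε (hG.mem_a_of_mem_E hε))

theorem precRest_graft : PrecRest s (S ∪ E) (hG.graft hsymm hle hε) := by
  refine ⟨rfl, fun α hα c hc ζ hζ => ?_⟩
  obtain ⟨hζα, hζc⟩ := Finset.mem_sdiff.1 hζ
  obtain ⟨hζα, hζT⟩ := Finset.mem_inter.1 hζα
  have notMem_h : ∀ ν ∈ c, ζ ∉ s.h ν := fun ν hν hζν =>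
    hζc (Finset.mem_biUnion.2 ⟨ν, hν, Finset.mem_inter.2 ⟨hζν, hζT⟩⟩)
  have notMem_graftH : ∀ ν ∈ c, ζ ∉ s.graftH D ε ν := fun ν hν => by
    rcases Finset.mem_union.1 hα with hαS | hαE
    · have hνa : ν ∈ s.a := hG.isInitialSegment.1 (hc ν hν).1
      have hνS : ν ∈ S := hG.isInitialSegment_S.2 α hαS ν hνa (hc ν hν).2.le
      rw [hG.graftH_eq_of_mem_S hε hνS]
      exact notMem_h ν hν
    · have hζD : ζ ∉ D :=
        Finset.disjoint_right.1 (hG.disjoint α (Finset.mem_union_right Q hαE)) hζα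
      rw [s.mem_graftH_iff_of_notMem hζD]
      exact notMem_h ν hν
  refine Finset.mem_sdiff.2 ⟨s.h_subset_graftH hζα, fun hζ => ?_⟩
  obtain ⟨ν, hν, hζν⟩ := Finset.mem_biUnion.1 hζ
  exact notMem_graftH ν hν hζν

end IsGraftable

theorem exists_isGraftable_sdiff_biUnion_h {F : Finset Ordinal} (ha : s.a = S ∪ E ∪ F)
    (hQ : Q ⊆ S) (hE : E.Nonempty) (hSE : ∀ ξ ∈ S, ∀ η ∈ E, ξ < η)
    (hEF : ∀ η ∈ E, ∀ ζ ∈ F, η < ζ)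
    (hF : ∀ η ∈ E, ∃ ζ₀ ∈ F, ∃ ζ₁ ∈ F, s.h ζ₀ ∩ s.h ζ₁ = (Q ∪ E).biUnion s.h ∧
      ∀ ξ ∈ S, f ξ ζ₀ ⊆ f ξ η ∧ f ξ ζ₁ ⊆ f ξ η) :
    ∃ Z, s.IsGraftable S E Q (S \ (Q ∪ E).biUnion s.h) Z := by
  have hSF : ∀ ξ ∈ S, ∀ ζ ∈ F, ξ < ζ := fun ξ hξ ζ hζ =>
    hE.elim fun η hη => (hSE ξ hξ η hη).trans (hEF η hη ζ hζ)
  have hSEF : ∀ ξ ∈ S ∪ E, ∀ ζ ∈ F, ξ < ζ := fun ξ hξ =>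
    (Finset.mem_union.1 hξ).elim (hSF ξ) (hEF ξ)
  choose! ζ₀ hζ₀ ζ₁ hζ₁ hinter hf using hF
  have hZF : ∀ η ∈ E, ∀ ζ ∈ ({ζ₀ η, ζ₁ η} : Finset Ordinal), ζ ∈ F := fun η hη => by
    simp [hζ₀ η hη, hζ₁ η hη]
  exact ⟨fun η => {ζ₀ η, ζ₁ η}, {
    isInitialSegment := ⟨ha ▸ Finset.subset_union_left, fun ξ hξ ν hν hle =>
      (Finset.mem_union.1 (ha ▸ hν)).resolve_right fun hνF => (hSEF ξ hξ ν hνF).not_ge hle⟩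
    lt := hSE
    Q_subset := hQ
    D_subset := Finset.sdiff_subset
    disjoint := fun η hη => Finset.disjoint_of_subset_right
      (Finset.subset_biUnion_of_mem s.h hη) Finset.sdiff_disjoint
    Z_subset := fun η hη ζ hζ => ha ▸ Finset.mem_union_right _ (hZF η hη ζ hζ)
    lt_Z := fun η hη ζ hζ ξ hξ => hSF ξ hξ ζ (hZF η hη ζ hζ)
    f_subset := fun η hη ζ hζ ξ hξ => by
      rcases Finset.mem_insert.1 hζ with rfl | hζ
      · exact (hf η hη ξ hξ).1
      · exact Finset.mem_singleton.1 hζ ▸ (hf η hη ξ hξ).2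
    mem_D_iff := fun η hη ρ hρ => by
      simp [← hinter η hη, hρ, imp_iff_not_or] }⟩

end PfCond

theorem stmt16_general {f : Ordinal → Ordinal → Set Ordinal} (hsymm : ∀ α β, f α β = f β α)
    (hle : ∀ α β, f α β ⊆ Set.Iic α) {s : PfCond f} {S E Q D : Finset Ordinal}
    {Z : Ordinal → Finset Ordinal} (hG : s.IsGraftable S E Q D Z) {ε : Ordinal} (hε : ε ∈ E) :
    ∃ r : PfCond f, r.a = S ∪ E ∧
      RestLe r r.a s S ∧
      RestLe r r.a s (Q ∪ E) ∧
      D ⊆ r.h ε ∧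
      PrecRest s (S ∪ E) r :=
  ⟨hG.graft hsymm hle hε, rfl, hG.restLe_graft_S hsymm hle hε,
    hG.restLe_graft_Q_union_E hsymm hle hε, hG.subset_graft_h hsymm hle hε,
    hG.precRest_graft hsymm hle hε⟩

theorem stmt16
    (f : Ordinal → Ordinal → Set Ordinal)
    (hsymm : ∀ α β, f α β = f β α)
    (hlt : ∀ α β γ, γ ∈ f α β → γ < α ∧ γ < β)
    (hcount : ∀ α β, (f α β).Countable)
    (s : PfCond f) (S E F Q : Finset Ordinal) (k : ℕ) (hk : 0 < k)
    (γ : ℕ → Ordinal) (γγ : ℕ → ℕ → Ordinal)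
    (ha : s.a = S ∪ E ∪ F) (hQ : Q ⊆ S)
    (hSE : ∀ ξ ∈ S, ∀ η ∈ E, ξ < η) (hEF : ∀ η ∈ E, ∀ ζ ∈ F, η < ζ)
    (hγmono : ∀ i j, i < j → j < k → γ i < γ j)
    (hE : E = (Finset.range k).image γ)
    (hF : F = ((Finset.range k) ×ˢ (Finset.range 2)).image fun x => γγ x.1 x.2)
    (hi : ∀ i < k, s.h (γγ i 0) ∩ s.h (γγ i 1) = (Q ∪ E).biUnion s.h)
    (hii : ∀ i < k, ∀ ξ ∈ S, f ξ (γ i) = f ξ (γγ i 0) ∧ f ξ (γ i) = f ξ (γγ i 1)) :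
    ∃ r : PfCond f, r.a = S ∪ E ∧
      RestLe r r.a s S ∧
      RestLe r r.a s (Q ∪ E) ∧
      S \ (Q ∪ E).biUnion s.h ⊆ r.h (γ 0) ∧
      PrecRest s (S ∪ E) r := by
  have hγ0 : γ 0 ∈ E := hE ▸ Finset.mem_image_of_mem γ (Finset.mem_range.2 hk)
  have hγγ : ∀ i < k, ∀ e < 2, γγ i e ∈ F := fun i hi e he => hF ▸
    Finset.mem_image_of_mem (fun x : ℕ × ℕ => γγ x.1 x.2)
      (Finset.mk_mem_product (Finset.mem_range.2 hi) (Finset.mem_range.2 he))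
  have hpair : ∀ η ∈ E, ∃ ζ₀ ∈ F, ∃ ζ₁ ∈ F, s.h ζ₀ ∩ s.h ζ₁ = (Q ∪ E).biUnion s.h ∧
      ∀ ξ ∈ S, f ξ ζ₀ ⊆ f ξ η ∧ f ξ ζ₁ ⊆ f ξ η := fun η hη => by
    obtain ⟨i, hik, rfl⟩ := Finset.mem_image.1 (hE ▸ hη)
    have hik := Finset.mem_range.1 hik
    exact ⟨γγ i 0, hγγ i hik 0 two_pos, γγ i 1, hγγ i hik 1 one_lt_two, hi i hik,
      fun ξ hξ => ⟨(hii i hik ξ hξ).1.ge, (hii i hik ξ hξ).2.ge⟩⟩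
  obtain ⟨Z, hG⟩ := PfCond.exists_isGraftable_sdiff_biUnion_h ha hQ ⟨γ 0, hγ0⟩ hSE hEF hpair
  exact stmt16_general hsymm (fun α β ν hν => (hlt α β ν hν).1.le) hG hγ0
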